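/- arXiv:1606.07551 — 3 statements merged into one kernel-verified Lean document; each statement's English description precedes it below -/
import Mathlib

section
/- Let G be a finite connected simple graph that is not a complete graph and contains no induced subgraph isomorphic to the path P_4 on four vertices. Then G is a join of two graphs: there exist nonempty graphs G_1 and G_2 such that G ≅ G_1 ∨ G_2. Equivalently, the complement of G is disconnected. -/
/-!
Let `S` be an inclusion-minimal vertex separator of `G`. By minimality every `s ∈ S` has a
neighbour in every component of `G - S`. If `s` missed a vertex of some component `C`, then `C`
would contain an edge `x y` with `s` adjacent to `x` but not to `y`, and `z - s - x - y` would be an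
induced `P_4` for any neighbour `z` of `s` in another component. So `S` is completely joined to its
complement.
-/

section

open SimpleGraph

variable {V : Type*} {G : SimpleGraph V} {S : Set V}

lemma pathGraph_four_isIndContained_of_adj {a b c d : V} (hab : G.Adj a b) (hbc : G.Adj b c)
    (hcd : G.Adj c d) (hac : ¬ G.Adj a c) (hbd : ¬ G.Adj b d) (had : ¬ G.Adj a d) :
    pathGraph 4 ⊴ G := by
  have hac' : a ≠ c := fun h => had (h ▸ hcd)
  have hbd' : b ≠ d := fun h => had (h ▸ hab)
  have had' : a ≠ d := fun h => hac (h ▸ hcd.symm)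
  have hinj : Function.Injective ![a, b, c, d] := by
    intro i j
    fin_cases i <;> fin_cases j <;>
      simp [hab.ne, hbc.ne, hcd.ne, hac', hbd', had', hab.ne', hbc.ne', hcd.ne', hac'.symm,
        hbd'.symm, had'.symm]
  have hadj (i j : Fin 4) :
      G.Adj (![a, b, c, d] i) (![a, b, c, d] j) ↔ (pathGraph 4).Adj i j := by
    fin_cases i <;> fin_cases j <;>
      simp [pathGraph_adj, hab, hbc, hcd, hac, hbd, had, hab.symm, hbc.symm, hcd.symm,
        G.adj_comm c a, G.adj_comm d b, G.adj_comm d a]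
  exact ⟨⟨⟨_, hinj⟩, hadj _ _⟩⟩

lemma exists_adj_mem_notMem_of_reachable {u v : V} (huv : G.Reachable u v) (hu : u ∈ S)
    (hv : v ∉ S) : ∃ x ∈ S, ∃ y ∉ S, G.Adj x y := by
  obtain ⟨p⟩ := huv
  obtain ⟨d, -, hx, hy⟩ := p.exists_boundary_dart S hu hv
  exact ⟨d.fst, hx, d.snd, hy, d.adj⟩

lemma not_preconnected_compl_of_isCompleteBetween (h : G.IsCompleteBetween S Sᶜ)
    (hS : S.Nonempty) (hSc : Sᶜ.Nonempty) : ¬ Gᶜ.Preconnected := by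
  obtain ⟨u, hu⟩ := hS
  obtain ⟨v, hv⟩ := hSc
  intro hG
  obtain ⟨x, hx, y, hy, hxy⟩ := exists_adj_mem_notMem_of_reachable (hG u v) hu hv
  exact ((G.compl_adj x y).1 hxy).2 (h hx hy)

/-- `S` is a vertex separator of `G` if `G - S` is disconnected. The empty graph counts as
connected here, so that a separator never contains all the vertices. -/
def IsVertexSeparator (G : SimpleGraph V) (S : Set V) : Prop :=
  ¬ (G.induce Sᶜ).Preconnected

lemma exists_isVertexSeparator_of_ne_top (hG : G ≠ ⊤) : ∃ S, IsVertexSeparator G S := by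
  obtain ⟨a, b, hab, hnadj⟩ := ne_top_iff_exists_not_adj.1 hG
  refine ⟨{a, b}ᶜ, fun h => ?_⟩
  rw [compl_compl] at h
  obtain ⟨x, rfl, ⟨y, hy⟩, hya, hxy⟩ :=
    exists_adj_mem_notMem_of_reachable (S := {⟨a, by simp⟩}) (h ⟨a, by simp⟩ ⟨b, by simp⟩)
      (by simp) (by simpa using hab.symm)
  obtain rfl | rfl := hy
  · exact hya rfl
  · exact hnadj hxy

lemma IsVertexSeparator.nonempty (hS : IsVertexSeparator G S) (hG : G.Preconnected) :
    S.Nonempty := by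
  by_contra! rfl
  rw [IsVertexSeparator, Set.compl_empty, (induceUnivIso G).preconnected_iff] at hS
  exact hS hG

lemma IsVertexSeparator.exists_not_reachable (hS : IsVertexSeparator G S) (x : ↥Sᶜ) :
    ∃ y, ¬ (G.induce Sᶜ).Reachable x y := by
  by_contra! h
  exact hS fun u v => (h u).symm.trans (h v)

lemma IsVertexSeparator.compl_nonempty (hS : IsVertexSeparator G S) : Sᶜ.Nonempty := by
  by_contra! h
  have : IsEmpty ↥Sᶜ := Set.isEmpty_coe_sort.2 h
  exact hS .of_subsingleton

lemma exists_reachable_adj_of_minimal_isVertexSeparator (hS : Minimal (IsVertexSeparator G) S)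
    {s : V} (hs : s ∈ S) (u : ↥Sᶜ) : ∃ x : ↥Sᶜ, (G.induce Sᶜ).Reachable u x ∧ G.Adj s x := by
  have hpre : (G.induce (S \ {s})ᶜ).Preconnected := by
    by_contra h
    exact (hS.le_of_le h Set.sdiff_subset hs).2 rfl
  have hu : u.1 ∈ (S \ {s})ᶜ := fun h => u.2 h.1
  obtain ⟨x, ⟨hx, hux⟩, y, hy, hxy⟩ := exists_adj_mem_notMem_of_reachable
    (S := {v : ↥(S \ {s})ᶜ | ∃ hv : v.1 ∈ Sᶜ, (G.induce Sᶜ).Reachable u ⟨v, hv⟩})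
    (hpre ⟨u, hu⟩ ⟨s, by simp⟩) ⟨u.2, .rfl⟩ fun h => h.1 hs
  have hyS : y.1 ∈ S := by
    by_contra hyS
    have hadj : (G.induce Sᶜ).Adj ⟨x, hx⟩ ⟨y, hyS⟩ := hxy
    exact hy ⟨hyS, hux.trans hadj.reachable⟩
  have hys : y = ⟨s, by simp⟩ := by
    by_contra hys
    exact y.2 ⟨hyS, fun h => hys (Subtype.ext h)⟩
  subst hys
  exact ⟨⟨x, hx⟩, hux, hxy.symm⟩

lemma isCompleteBetween_compl_of_minimal_isVertexSeparator
    (hS : Minimal (IsVertexSeparator G) S) (hP4 : ¬ pathGraph 4 ⊴ G) :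
    G.IsCompleteBetween S Sᶜ := by
  intro s hs v hv
  by_contra hsv
  obtain ⟨w, hvw, hsw⟩ := exists_reachable_adj_of_minimal_isVertexSeparator hS hs ⟨v, hv⟩
  obtain ⟨x, hsx, y, hsy, hxy⟩ :=
    exists_adj_mem_notMem_of_reachable (S := {t : ↥Sᶜ | G.Adj s t}) hvw.symm hsw hsv
  obtain ⟨t, hxt⟩ := hS.prop.exists_not_reachable x
  obtain ⟨z, htz, hsz⟩ := exists_reachable_adj_of_minimal_isVertexSeparator hS hs t
  have hxz : ¬ (G.induce Sᶜ).Reachable x z := fun h => hxt (h.trans htz.symm)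
  have hzx : ¬ G.Adj z x := fun h => hxz (Adj.reachable (G := G.induce Sᶜ) h.symm)
  have hzy : ¬ G.Adj z y := fun h =>
    hxz (hxy.reachable.trans (Adj.reachable (G := G.induce Sᶜ) h.symm))
  exact hP4 (pathGraph_four_isIndContained_of_adj hsz.symm hsx hxy hzx hsy hzy)

end

/- **Statement 10.** Let `G` be a finite connected simple graph that is not complete and has
no induced subgraph isomorphic to the path `P_4`.  Then `G` is a join of two (nonempty)
graphs — i.e. the vertex set splits into two nonempty parts with all cross edges present —
and, equivalently, the complement of `G` is disconnected. -/
theorem join_decomposition_of_P4_free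
    {V : Type*} [Fintype V] (G : SimpleGraph V) (hG : G.Connected) (hnc : G ≠ ⊤)
    (hP4 : ∀ s : Set V, ¬ Nonempty (G.induce s ≃g SimpleGraph.pathGraph 4)) :
    (∃ s : Set V, s.Nonempty ∧ sᶜ.Nonempty ∧ ∀ u ∈ s, ∀ v ∈ sᶜ, G.Adj u v) ∧
      ¬ (Gᶜ).Connected := by
  have hfree : ¬ (SimpleGraph.pathGraph 4).IsIndContained G := fun h =>
    let ⟨s, ⟨e⟩⟩ := SimpleGraph.isIndContained_iff_exists_iso_induce.1 h
    hP4 s ⟨e.symm⟩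
  obtain ⟨S, hS⟩ := exists_minimal_of_wellFoundedLT (IsVertexSeparator G)
    (exists_isVertexSeparator_of_ne_top hnc)
  have hne : S.Nonempty := hS.prop.nonempty hG.preconnected
  have hne' : Sᶜ.Nonempty := hS.prop.compl_nonempty
  have hjoin : G.IsCompleteBetween S Sᶜ :=
    isCompleteBetween_compl_of_minimal_isVertexSeparator hS hfree
  exact ⟨⟨S, hne, hne', fun _ hu _ hv => hjoin hu hv⟩,
    fun h => not_preconnected_compl_of_isCompleteBetween hjoin hne hne' h.preconnected⟩
end

section
/- Let G be a finite connected simple graph on n vertices that has exactly two distance eigenvalues (counted with multiplicity) different from −1 and −3. Then G is not a complete graph, n ≥ 4, ∂_3(G) ≤ −1 and ∂_n(G) ≥ −3; moreover ∂_2(G) > −1, i.e., both distance eigenvalues of G different from −1 and −3 are strictly greater than −1. -/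
/-- The distance matrix of a finite simple graph, over `ℝ`. -/
noncomputable def distMatrix {V : Type*} [Fintype V] (G : SimpleGraph V) : Matrix V V ℝ :=
  Matrix.of fun u v => (G.dist u v : ℝ)

/-- The multiset of distance eigenvalues of `G` (the roots, with multiplicity, of the
characteristic polynomial of the distance matrix). -/
noncomputable def distEigs {V : Type*} [Fintype V] [DecidableEq V] (G : SimpleGraph V) :
    Multiset ℝ :=
  (distMatrix G).charpoly.roots

/-- The distance eigenvalues of `G` listed in non-increasing order,
`∂_1 ≥ ∂_2 ≥ ... ≥ ∂_n`; the `i`-th eigenvalue `∂_i` is `(sortedDistEigs G).getD (i-1) 0`. -/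
noncomputable def sortedDistEigs {V : Type*} [Fintype V] [DecidableEq V] (G : SimpleGraph V) :
    List ℝ :=
  ((distEigs G).sort (· ≤ ·)).reverse

/-!
In a connected non-complete graph some induced path on three vertices is isometrically embedded,
so the distance matrix of `P₃` is a principal submatrix of that of `G`. The distance eigenvalues of
`P₃` are `1 + √3`, `1 - √3` and `-2`, two of which exceed `-1`. By Cauchy interlacing, `G` then has
at least two distance eigenvalues greater than `-1`; these must be the two exceptional ones, and all
the others are `-1` or `-3`. A non-complete `G` on three vertices is `P₃` itself, which has three
exceptional eigenvalues, and `Kₙ` has at most one.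

Interlacing comes from Sylvester's law of inertia: the number of eigenvalues of a symmetric `A`
greater than `c` is the positive index of inertia of `A - c`, which cannot increase under
restriction to a subspace.
-/

theorem lt_getElem_iff_lt_countP {α : Type*} [LinearOrder α] {l : List α} (hl : l.SortedGE) (c : α)
    {i : ℕ} (hi : i < l.length) : c < l[i] ↔ i < l.countP (c < ·) := by
  induction l generalizing i with
  | nil => simp at hi
  | cons a l ih =>
    rw [List.sortedGE_iff_pairwise, List.pairwise_cons, ← List.sortedGE_iff_pairwise] at hl
    obtain ⟨ha, hl⟩ := hl
    by_cases hc : c < a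
    · cases i with
      | zero => simp [hc]
      | succ i => simpa [hc] using ih hl (Nat.lt_of_succ_lt_succ hi)
    · have hle : ∀ x ∈ a :: l, x ≤ c :=
        List.forall_mem_cons.2 ⟨not_lt.1 hc, fun x hx => (ha x hx).trans (not_lt.1 hc)⟩
      have hcount : (a :: l).countP (c < ·) = 0 := by simpa [List.countP_eq_zero] using hle
      simpa [hcount] using hle _ (List.getElem_mem hi)

section Inertia

open Matrix

theorem sigPos_comp_le {R M M' : Type*} [CommRing R] [LinearOrder R] [StrongRankCondition R]
    [AddCommGroup M] [Module R M] [Module.Finite R M] [AddCommGroup M'] [Module R M']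
    [Module.Finite R M'] (Q : QuadraticForm R M) (f : M' →ₗ[R] M) :
    sigPos (Q.comp f) ≤ sigPos Q := by
  obtain ⟨W, hfinrank, hW⟩ := exists_finrank_eq_sigPos_and_posDef (Q.comp f)
  have hinj : Function.Injective (f.domRestrict W) := by
    refine (injective_iff_map_eq_zero _).2 fun x hx => ?_
    by_contra hne
    exact (hW x hne).ne' (by simpa using congrArg Q hx)
  rw [← hfinrank, ← LinearMap.finrank_range_of_inj hinj]
  refine le_sigPos_of_posDef Q ?_
  rintro ⟨_, x, rfl⟩ hx
  exact hW x fun h => hx (by simp [h])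

theorem toQuadraticForm'_transpose_mul_mul {R m n : Type*} [CommRing R] [Fintype m] [DecidableEq m]
    [Fintype n] [DecidableEq n] (A : Matrix n n R) (P : Matrix n m R) :
    (Pᵀ * A * P).toQuadraticForm' = A.toQuadraticForm'.comp P.toLin' := by
  rw [toQuadraticForm', ← toLinearMap₂'_comp]
  rfl

theorem toQuadraticForm'_diagonal {R n : Type*} [CommRing R] [Fintype n] [DecidableEq n]
    (w : n → R) : (diagonal w).toQuadraticForm' = QuadraticMap.weightedSumSquares R w := by
  ext x
  simp [toQuadraticForm', toLinearMap₂'_apply', dotProduct, mulVec_diagonal,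
    QuadraticMap.weightedSumSquares_apply, mul_left_comm]

theorem sigPos_transpose_mul_mul_le {R m n : Type*} [CommRing R] [LinearOrder R]
    [StrongRankCondition R] [Fintype m] [DecidableEq m] [Fintype n] [DecidableEq n]
    (A : Matrix n n R) (P : Matrix n m R) :
    sigPos (Pᵀ * A * P).toQuadraticForm' ≤ sigPos A.toQuadraticForm' := by
  rw [toQuadraticForm'_transpose_mul_mul]
  exact sigPos_comp_le _ _

open Polynomial in
theorem roots_charpoly_sub_scalar {K n : Type*} [Field K] [Fintype n] [DecidableEq n]
    (A : Matrix n n K) (c : K) :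
    (A - scalar n c).charpoly.roots = A.charpoly.roots.map (· - c) := by
  rw [charpoly_sub_scalar]
  simpa using roots_comp_C_mul_X_add_C A.charpoly 1 c isUnit_one

variable {m n : Type*} [Fintype m] [DecidableEq m] [Fintype n] [DecidableEq n]

theorem card_filter_pos_roots_charpoly {A : Matrix n n ℝ} (hA : A.IsHermitian) :
    (A.charpoly.roots.filter (0 < ·)).card = sigPos A.toQuadraticForm' := by
  set U : Matrix n n ℝ := hA.eigenvectorUnitary.1
  set D : Matrix n n ℝ := diagonal hA.eigenvalues
  have hUU : Uᵀ * U = 1 := Unitary.coe_star_mul_self hA.eigenvectorUnitary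
  have hA_eq : A = U * D * Uᵀ := hA.spectral_theorem
  have hD_eq : D = Uᵀ * A * U := by
    rw [hA_eq, ← Matrix.mul_assoc, ← Matrix.mul_assoc, hUU, Matrix.one_mul, Matrix.mul_assoc, hUU,
      Matrix.mul_one]
  have hsig : sigPos A.toQuadraticForm' = sigPos D.toQuadraticForm' := by
    apply le_antisymm
    · conv_lhs => rw [hA_eq]
      simpa using sigPos_transpose_mul_mul_le D Uᵀ
    · rw [hD_eq]
      exact sigPos_transpose_mul_mul_le A U
  rw [hsig, toQuadraticForm'_diagonal, QuadraticForm.sigPos_weightedSumSquares,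
    Set.ncard_eq_toFinset_card', hA.roots_charpoly_eq_eigenvalues, Multiset.filter_map,
    Multiset.card_map, Set.toFinset_ofPred]
  rfl

theorem card_filter_lt_roots_charpoly {A : Matrix n n ℝ} (hA : A.IsHermitian) (c : ℝ) :
    (A.charpoly.roots.filter (c < ·)).card = sigPos (A - scalar n c).toQuadraticForm' := by
  have hAc : (A - scalar n c).IsHermitian := hA.sub (isHermitian_diagonal _)
  rw [← card_filter_pos_roots_charpoly hAc, roots_charpoly_sub_scalar, Multiset.filter_map,
    Multiset.card_map]
  simp

theorem card_filter_lt_roots_charpoly_transpose_mul_mul_le {A : Matrix n n ℝ} (hA : A.IsHermitian)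
    {P : Matrix n m ℝ} (hP : Pᵀ * P = 1) (c : ℝ) :
    ((Pᵀ * A * P).charpoly.roots.filter (c < ·)).card ≤
      (A.charpoly.roots.filter (c < ·)).card := by
  have hPA : Pᵀ * A * P - scalar m c = Pᵀ * (A - scalar n c) * P := by
    simp [Matrix.mul_sub, Matrix.sub_mul, hP, ← smul_one_eq_diagonal]
  have hPAP : (Pᵀ * A * P).IsHermitian := isHermitian_conjTranspose_mul_mul P hA
  rw [card_filter_lt_roots_charpoly hPAP, card_filter_lt_roots_charpoly hA, hPA]
  exact sigPos_transpose_mul_mul_le _ P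

theorem card_filter_lt_roots_charpoly_submatrix_le {A : Matrix n n ℝ} (hA : A.IsHermitian)
    (f : m ↪ n) (c : ℝ) :
    ((A.submatrix f f).charpoly.roots.filter (c < ·)).card ≤
      (A.charpoly.roots.filter (c < ·)).card := by
  let P : Matrix n m ℝ := (1 : Matrix n n ℝ).submatrix id f
  have hP : Pᵀ * P = 1 := by
    ext i j
    simp [P, Matrix.mul_apply, one_apply]
  have hPA : Pᵀ * A * P = A.submatrix f f := by
    ext i j
    simp [P, Matrix.mul_apply, one_apply]
  rw [← hPA]
  exact card_filter_lt_roots_charpoly_transpose_mul_mul_le hA hP c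

end Inertia

section SortedDistEigs

theorem isHermitian_distMatrix {V : Type*} [Fintype V] (G : SimpleGraph V) :
    (distMatrix G).IsHermitian := by
  ext u v
  simp [distMatrix, SimpleGraph.dist_comm]

variable {V : Type*} [Fintype V] [DecidableEq V] (G : SimpleGraph V)

theorem card_distEigs : (distEigs G).card = Fintype.card V := by
  simp [distEigs, (isHermitian_distMatrix G).roots_charpoly_eq_eigenvalues]

theorem length_sortedDistEigs : (sortedDistEigs G).length = Fintype.card V := by
  simp [sortedDistEigs, card_distEigs]

theorem coe_sortedDistEigs : (sortedDistEigs G : Multiset ℝ) = distEigs G := by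
  rw [sortedDistEigs, Multiset.coe_reverse, Multiset.sort_eq]

theorem sortedGE_sortedDistEigs : (sortedDistEigs G).SortedGE :=
  List.sortedGE_reverse.2 ((distEigs G).pairwise_sort (· ≤ ·)).sortedLE

variable {G}

theorem sortedDistEigs_getD_mem_distEigs {i : ℕ} (hi : i < Fintype.card V) (d : ℝ) :
    (sortedDistEigs G).getD i d ∈ distEigs G := by
  rw [← length_sortedDistEigs G] at hi
  rw [← coe_sortedDistEigs, Multiset.mem_coe, List.getD_eq_getElem _ _ hi]
  exact List.getElem_mem hi

theorem lt_sortedDistEigs_getD_iff {i : ℕ} (hi : i < Fintype.card V) (c d : ℝ) :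
    c < (sortedDistEigs G).getD i d ↔ i < ((distEigs G).filter (c < ·)).card := by
  rw [← length_sortedDistEigs G] at hi
  rw [List.getD_eq_getElem _ _ hi, lt_getElem_iff_lt_countP (sortedGE_sortedDistEigs G),
    ← Multiset.countP_eq_card_filter, ← coe_sortedDistEigs, Multiset.coe_countP]

end SortedDistEigs

section IsometricEmbedding

variable {V W : Type*} [Fintype V] [DecidableEq V] [Fintype W] [DecidableEq W]
  {G : SimpleGraph V} {H : SimpleGraph W}

theorem card_filter_lt_distEigs_le (f : W ↪ V) (hf : ∀ i j, G.dist (f i) (f j) = H.dist i j)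
    (c : ℝ) : ((distEigs H).filter (c < ·)).card ≤ ((distEigs G).filter (c < ·)).card := by
  have hsub : distMatrix H = (distMatrix G).submatrix f f := by
    ext i j
    simp [distMatrix, hf]
  rw [distEigs, hsub]
  exact card_filter_lt_roots_charpoly_submatrix_le (isHermitian_distMatrix G) f c

theorem distEigs_eq_of_equiv (e : W ≃ V) (he : ∀ i j, G.dist (e i) (e j) = H.dist i j) :
    distEigs G = distEigs H := by
  have hreindex : distMatrix G = Matrix.reindex e e (distMatrix H) := by
    ext u v
    simp [distMatrix, ← he]
  rw [distEigs, hreindex, Matrix.charpoly_reindex, distEigs]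

end IsometricEmbedding

section PathGraphThree

open SimpleGraph

variable {V : Type*} {G : SimpleGraph V}

theorem dist_eq_two_of_adj_of_adj {u v w : V} (huw : G.Adj u w) (hwv : G.Adj w v) (huv : u ≠ v)
    (hnadj : ¬G.Adj u v) : G.dist u v = 2 := by
  let p : G.Walk u v := .cons huw (.cons hwv .nil)
  exact le_antisymm (dist_le p) (p.reachable.one_lt_dist_of_ne_of_not_adj huv hnadj)

theorem dist_pathGraph {n : ℕ} (i j : Fin n) : (pathGraph n).dist i j = Nat.dist i j := by
  have hle (p : (pathGraph n).Walk i j) : Nat.dist i j ≤ p.length := by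
    induction p with
    | nil => simp [Nat.dist]
    | cons h p ih =>
      rw [pathGraph_adj] at h
      rw [Walk.length_cons]
      grind [Nat.dist]
  have hge (k : ℕ) : ∀ i j : Fin n, (i : ℕ) + k = j → (pathGraph n).dist i j ≤ k := by
    induction k with
    | zero => exact fun i j h => (by simp [Fin.ext h])
    | succ k ih =>
      intro i j h
      let l : Fin n := ⟨i + k, by omega⟩
      have hlj : (pathGraph n).Adj l j := pathGraph_adj.2 (.inl h)
      calc (pathGraph n).dist i j
          ≤ (pathGraph n).dist i l + (pathGraph n).dist l j :=
            (pathGraph_preconnected n i l).dist_triangle_left j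
        _ ≤ k + 1 := add_le_add (ih i l rfl) (dist_eq_one_iff_adj.2 hlj).le
  obtain ⟨p, hp⟩ := (pathGraph_preconnected n i j).exists_walk_length_eq_dist
  refine le_antisymm ?_ (hp ▸ hle p)
  rcases le_total i j with hij | hij
  · exact hge _ i j (by grind [Nat.dist])
  · rw [dist_comm]
    exact hge _ j i (by grind [Nat.dist])

theorem exists_pathGraph_three_dist_eq (hG : G.Connected) (hne : G ≠ ⊤) :
    ∃ f : Fin 3 ↪ V, ∀ i j, G.dist (f i) (f j) = (pathGraph 3).dist i j := by
  obtain ⟨x, y, hxy, hxy_nadj⟩ := ne_top_iff_exists_not_adj.1 hne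
  obtain ⟨p, hp⟩ := hG.exists_walk_length_eq_dist x y
  obtain ⟨u, w, v, huw, hwv, hnadj, huv⟩ :=
    Walk.exists_adj_adj_not_adj_ne hp (hG.one_lt_dist_of_ne_of_not_adj hxy hxy_nadj)
  have hd01 : G.dist u w = 1 := dist_eq_one_iff_adj.2 huw
  have hd12 : G.dist w v = 1 := dist_eq_one_iff_adj.2 hwv
  have hd02 : G.dist u v = 2 := dist_eq_two_of_adj_of_adj huw hwv huv hnadj
  have hinj : Function.Injective ![u, w, v] := by
    simp [Function.Injective, Fin.forall_fin_succ, huw.ne, huw.ne', huv, huv.symm, hwv.ne, hwv.ne']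
  refine ⟨⟨![u, w, v], hinj⟩, fun i j => ?_⟩
  rw [dist_pathGraph]
  fin_cases i <;> fin_cases j <;>
    simp [Nat.dist, hd01, hd12, hd02, G.dist_comm (u := w) (v := u), G.dist_comm (u := v)]

end PathGraphThree

section SmallSpectra

open Polynomial SimpleGraph

theorem distMatrix_pathGraph_three :
    distMatrix (pathGraph 3) = !![0, 1, 2; 1, 0, 1; 2, 1, 0] := by
  ext i j
  fin_cases i <;> fin_cases j <;> simp [distMatrix, dist_pathGraph, Nat.dist]

theorem distEigs_pathGraph_three : distEigs (pathGraph 3) = {1 + √3, 1 - √3, -2} := by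
  have hsqrt : √3 ^ 2 = 3 := Real.sq_sqrt (by norm_num)
  have hcharpoly : (distMatrix (pathGraph 3)).charpoly =
      (({1 + √3, 1 - √3, -2} : Multiset ℝ).map fun a => X - C a).prod := by
    refine Polynomial.funext fun t => ?_
    rw [distMatrix_pathGraph_three, Matrix.eval_charpoly, Matrix.det_fin_three]
    simp only [Matrix.scalar_apply, Matrix.sub_apply, Matrix.diagonal_apply, Matrix.of_apply,
      Matrix.cons_val, Fin.reduceEq, if_true, if_false, Multiset.insert_eq_cons, Multiset.map_cons,
      Multiset.map_singleton, Multiset.prod_cons, Multiset.prod_singleton, eval_mul, eval_sub,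
      eval_X, eval_C]
    linear_combination (t + 2) * hsqrt
  rw [distEigs, hcharpoly, roots_multiset_prod_X_sub_C]

theorem distMatrix_top {V : Type*} [Fintype V] [DecidableEq V] :
    distMatrix (⊤ : SimpleGraph V) = Matrix.vecMulVec 1 1 - Matrix.scalar V 1 := by
  ext u v
  rcases eq_or_ne u v with rfl | huv <;> simp [distMatrix, dist_top, *]

theorem distEigs_top {V : Type*} [Fintype V] [DecidableEq V] [Nonempty V] :
    distEigs (⊤ : SimpleGraph V) =
      ((Fintype.card V : ℝ) - 1) ::ₘ Multiset.replicate (Fintype.card V - 1) (-1) := by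
  obtain ⟨k, hk⟩ := Nat.exists_eq_succ_of_ne_zero (Fintype.card_ne_zero (α := V))
  have hcharpoly : (Matrix.vecMulVec (1 : V → ℝ) 1).charpoly = (X - C (k + 1 : ℝ)) * X ^ k := by
    rw [Matrix.charpoly_vecMulVec, hk, one_dotProduct_one, hk, smul_eq_C_mul,
      Nat.cast_succ, Nat.succ_sub_one, pow_succ']
    ring
  have hne : (X - C (k + 1 : ℝ)) * X ^ k ≠ 0 :=
    mul_ne_zero (X_sub_C_ne_zero _) (pow_ne_zero _ X_ne_zero)
  rw [distEigs, distMatrix_top, roots_charpoly_sub_scalar, hcharpoly, roots_mul hne,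
    roots_X_sub_C, roots_X_pow, hk]
  simp [Multiset.nsmul_singleton]

end SmallSpectra

section ConnectedNotComplete

open SimpleGraph

variable {V : Type*} [Fintype V] [DecidableEq V] {G : SimpleGraph V}

theorem neg_one_lt_one_sub_sqrt_three : -1 < 1 - √3 := by
  have hsqrt : √3 < 2 := (Real.sqrt_lt' two_pos).2 (by norm_num)
  linarith

theorem neg_one_lt_one_add_sqrt_three : -1 < 1 + √3 := by
  linarith [Real.sqrt_nonneg 3]

theorem two_le_card_filter_neg_one_lt_distEigs (hG : G.Connected) (hne : G ≠ ⊤) :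
    2 ≤ ((distEigs G).filter (-1 < ·)).card := by
  obtain ⟨f, hf⟩ := exists_pathGraph_three_dist_eq hG hne
  have hpath : ({1 + √3, 1 - √3} : Multiset ℝ) ≤ (distEigs (pathGraph 3)).filter (-1 < ·) := by
    rw [distEigs_pathGraph_three, Multiset.le_filter]
    refine ⟨by simp, Multiset.forall_mem_cons.2 ⟨neg_one_lt_one_add_sqrt_three, ?_⟩⟩
    simpa only [Multiset.mem_singleton, forall_eq] using neg_one_lt_one_sub_sqrt_three
  exact (Multiset.card_le_card hpath).trans (card_filter_lt_distEigs_le f hf (-1))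

theorem distEigs_eq_of_card_eq_three (hG : G.Connected) (hne : G ≠ ⊤)
    (hcard : Fintype.card V = 3) : distEigs G = {1 + √3, 1 - √3, -2} := by
  obtain ⟨f, hf⟩ := exists_pathGraph_three_dist_eq hG hne
  have hbij : Function.Bijective f :=
    (Fintype.bijective_iff_injective_and_card f).2 ⟨f.injective, by simp [hcard]⟩
  rw [← distEigs_pathGraph_three]
  exact distEigs_eq_of_equiv (Equiv.ofBijective f hbij) hf

theorem ne_top_of_card_filter_distEigs_eq_two (hG : G.Connected)
    (h2 : ((distEigs G).filter fun x => x ≠ -1 ∧ x ≠ -3).card = 2) : G ≠ ⊤ := by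
  rintro rfl
  have : Nonempty V := hG.nonempty
  have hreplicate : (Multiset.replicate (Fintype.card V - 1) (-1 : ℝ)).filter
      (fun x => x ≠ -1 ∧ x ≠ -3) = 0 :=
    Multiset.filter_eq_nil.2 fun x hx h => h.1 (Multiset.eq_of_mem_replicate hx)
  rw [distEigs_top, Multiset.filter_cons, hreplicate, add_zero] at h2
  split_ifs at h2 <;> simp at h2

theorem four_le_card_of_card_filter_distEigs_eq_two (hG : G.Connected) (hne : G ≠ ⊤)
    (h2 : ((distEigs G).filter fun x => x ≠ -1 ∧ x ≠ -3).card = 2) : 4 ≤ Fintype.card V := by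
  obtain ⟨f, -⟩ := exists_pathGraph_three_dist_eq hG hne
  have hthree : 3 ≤ Fintype.card V := by simpa using Fintype.card_le_of_embedding f
  refine hthree.lt_of_ne fun hcard => ?_
  have hself : ∀ x ∈ distEigs G, x ≠ -1 ∧ x ≠ -3 := by
    rw [distEigs_eq_of_card_eq_three hG hne hcard.symm]
    have hgt {x : ℝ} (hx : -1 < x) : x ≠ -1 ∧ x ≠ -3 := ⟨hx.ne', by linarith⟩
    simp only [Multiset.insert_eq_cons, Multiset.mem_cons, Multiset.mem_singleton]
    rintro x (rfl | rfl | rfl)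
    · exact hgt neg_one_lt_one_add_sqrt_three
    · exact hgt neg_one_lt_one_sub_sqrt_three
    · norm_num
  rw [Multiset.filter_eq_self.2 hself, card_distEigs] at h2
  omega

end ConnectedNotComplete

/- **Statement 16.** Let `G` be a finite connected simple graph on `n` vertices having exactly
two distance eigenvalues (with multiplicity) different from `−1` and `−3`.  Then `G` is not
complete, `n ≥ 4`, `∂_3(G) ≤ −1`, `∂_n(G) ≥ −3`, and moreover `∂_2(G) > −1`, i.e. both
distance eigenvalues different from `−1, −3` are strictly greater than `−1`. -/
open scoped Classical in
theorem exactly_two_distEigs_ne_neg_one_neg_three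
    {V : Type*} [Fintype V] [DecidableEq V] (G : SimpleGraph V) (hG : G.Connected)
    (h2 : ((distEigs G).filter fun x => x ≠ -1 ∧ x ≠ -3).card = 2) :
    G ≠ ⊤ ∧ 4 ≤ Fintype.card V ∧
      (sortedDistEigs G).getD 2 0 ≤ -1 ∧
      -3 ≤ (sortedDistEigs G).getD (Fintype.card V - 1) 0 ∧
      -1 < (sortedDistEigs G).getD 1 0 ∧
      ∀ x ∈ (distEigs G).filter fun x => x ≠ -1 ∧ x ≠ -3, -1 < x := by
  have hne : G ≠ ⊤ := ne_top_of_card_filter_distEigs_eq_two hG h2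
  have hcard := four_le_card_of_card_filter_distEigs_eq_two hG hne h2
  have heq : (distEigs G).filter (-1 < ·) = (distEigs G).filter fun x => x ≠ -1 ∧ x ≠ -3 :=
    Multiset.eq_of_le_of_card_le
      (Multiset.monotone_filter_right _ fun x hx => ⟨hx.ne', by linarith⟩)
      (h2.trans_le (two_le_card_filter_neg_one_lt_distEigs hG hne))
  have hcount : ((distEigs G).filter (-1 < ·)).card = 2 := by rw [heq, h2]
  have hlt : ∀ x ∈ (distEigs G).filter fun x => x ≠ -1 ∧ x ≠ -3, -1 < x := by
    rw [← heq]
    exact fun x hx => Multiset.of_mem_filter hx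
  have hge : ∀ x ∈ distEigs G, -3 ≤ x := fun x hx => by
    by_contra! hx3
    linarith [hlt x (Multiset.mem_filter.2 ⟨hx, by linarith, hx3.ne⟩)]
  refine ⟨hne, hcard, ?_, hge _ (sortedDistEigs_getD_mem_distEigs (by omega) 0), ?_, hlt⟩
  · rw [← not_lt, lt_sortedDistEigs_getD_iff (by omega), hcount]
    omega
  · rw [lt_sortedDistEigs_getD_iff (by omega), hcount]
    omega
end

section
/- Every finite connected simple graph with exactly two distance eigenvalues (counted with multiplicity) different from −1 and −3 is determined by its distance spectrum: if G has exactly two distance eigenvalues different from −1 and −3 and H is any finite connected simple graph whose distance spectrum (the multiset of eigenvalues of its distance matrix) equals that of G, then H is isomorphic to G. -/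
/-!
Let `D` be the distance matrix of such a graph. Vectors on few vertices that are orthonormal for
`D + 1` or for `-(D + 3)` force eigenvalues above `-1` or below `-3`, of which there are at most two
in total. This bounds the diameter by two and excludes five induced subgraphs of the complement,
and so makes the graph a join of two disjoint unions of cliques.

Then `D + 1` is constant on the blocks cut out by the cliques, with an invertible matrix of block
values. As `(D + 1) * (D + 3)` has rank two, so has the quotient of `D + 3` by the partition into
cliques. The vanishing of its `3 × 3` minors on two cliques from one side and one from the other
leaves three families of clique sizes. The number of vertices, the rank of `D + 1` (the number of
cliques) and the trace of `(D + 1) ^ 2` are determined by the spectrum and separate all members of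
these families, up to exchanging the two sides.
-/

namespace DistanceSpectrum

open Matrix Polynomial

universe u

section Spectral

variable {n : Type*} [Fintype n] [DecidableEq n] {A : Matrix n n ℝ}

lemma roots_charpoly_cfc (hA : A.IsHermitian) (f : ℝ → ℝ) :
    (cfc f A).charpoly.roots = A.charpoly.roots.map f := by
  rw [hA.charpoly_cfc_eq, hA.roots_charpoly_eq_eigenvalues, Multiset.map_map]
  have := roots_multiset_prod_X_sub_C (Finset.univ.val.map fun i => f (hA.eigenvalues i))
  rwa [Multiset.map_map] at this

lemma isHermitian_aeval (hA : A.IsHermitian) (p : ℝ[X]) : (aeval A p).IsHermitian := by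
  have hA' : IsSelfAdjoint A := hA
  rw [← cfc_polynomial p A]
  exact cfc_predicate p.eval A

lemma roots_charpoly_aeval (hA : A.IsHermitian) (p : ℝ[X]) :
    (aeval A p).charpoly.roots = A.charpoly.roots.map p.eval := by
  have hA' : IsSelfAdjoint A := hA
  rw [← cfc_polynomial p A, roots_charpoly_cfc hA]

lemma rank_eq_countP_roots (hA : A.IsHermitian) : A.rank = A.charpoly.roots.countP (· ≠ 0) := by
  rw [hA.rank_eq_card_non_zero_eigs, hA.roots_charpoly_eq_eigenvalues, Multiset.countP_map,
    Fintype.card_subtype]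
  rfl

lemma rank_aeval (hA : A.IsHermitian) (p : ℝ[X]) :
    (aeval A p).rank = A.charpoly.roots.countP fun t => p.eval t ≠ 0 := by
  rw [rank_eq_countP_roots (isHermitian_aeval hA p), roots_charpoly_aeval hA, Multiset.countP_map,
    Multiset.countP_eq_card_filter]

lemma trace_aeval (hA : A.IsHermitian) (p : ℝ[X]) :
    (aeval A p).trace = (A.charpoly.roots.map p.eval).sum := by
  have hp := isHermitian_aeval hA p
  rw [← roots_charpoly_aeval hA, hp.trace_eq_sum_eigenvalues, hp.roots_charpoly_eq_eigenvalues]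
  rfl

open scoped MatrixOrder in
-- The positive part of `A` dominates `A`, and its rank is the number of positive eigenvalues.
lemma card_le_countP_pos_roots (hA : A.IsHermitian) {m : Type*} [Fintype m] {Y : Matrix n m ℝ}
    (hY : (Yᵀ * A * Y).PosDef) : Fintype.card m ≤ A.charpoly.roots.countP (0 < ·) := by
  classical
  set P := cfc (fun t : ℝ => max t 0) A with hP
  have hAP : A ≤ P := by
    conv_lhs => rw [← cfc_id ℝ A hA]
    exact cfc_mono (fun t _ => le_max_left t 0) (A.finite_spectrum.continuousOn _)
      (A.finite_spectrum.continuousOn _)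
  have hYP : (Yᵀ * P * Y).PosDef := by
    have := hY.add_posSemidef ((Matrix.le_iff.mp hAP).conjTranspose_mul_mul_same Y)
    simpa [Matrix.mul_sub, Matrix.sub_mul] using this
  calc Fintype.card m = (Yᵀ * P * Y).rank := (rank_of_isUnit _ hYP.isUnit).symm
    _ ≤ (Yᵀ * P).rank := rank_mul_le_left _ _
    _ ≤ P.rank := rank_mul_le_right _ _
    _ = P.charpoly.roots.countP (· ≠ 0) := rank_eq_countP_roots (cfc_predicate _ A)
    _ = A.charpoly.roots.countP (0 < ·) := by
      rw [hP, roots_charpoly_cfc hA, Multiset.countP_map, Multiset.countP_eq_card_filter]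
      simp

lemma card_le_countP_pos_roots_of_submatrix (hA : A.IsHermitian) {s m : Type*} [Fintype s]
    [Fintype m] [DecidableEq m] {f : s → n} {K : Matrix s s ℤ}
    (hf : A.submatrix f f = K.map (Int.castRingHom ℝ)) {R : Matrix m s ℤ} (hR : R * K * Rᵀ = 1) :
    Fintype.card m ≤ A.charpoly.roots.countP (0 < ·) := by
  set E : Matrix n s ℝ := (1 : Matrix n n ℝ).submatrix id f with hE
  set Z : Matrix m s ℝ := R.map (Int.castRingHom ℝ)
  have hsub : Eᵀ * A * E = A.submatrix f f := by
    ext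
    simp [hE, Matrix.mul_apply, Matrix.one_apply]
  have hZ : Z * A.submatrix f f * Zᵀ = 1 := by
    rw [hf, ← transpose_map, ← Matrix.map_mul, ← Matrix.map_mul, hR]
    exact Matrix.map_one _ (map_zero _) (map_one _)
  have hone : (E * Zᵀ)ᵀ * A * (E * Zᵀ) = 1 := by
    rw [← hZ, ← hsub, transpose_mul, transpose_transpose]
    simp only [Matrix.mul_assoc]
  exact card_le_countP_pos_roots hA (hone ▸ PosDef.one)

lemma card_le_countP_eval_pos (hA : A.IsHermitian) (p : ℝ[X]) {s m : Type*} [Fintype s]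
    [Fintype m] [DecidableEq m] {f : s → n} {K : Matrix s s ℤ}
    (hf : (aeval A p).submatrix f f = K.map (Int.castRingHom ℝ)) {R : Matrix m s ℤ}
    (hR : R * K * Rᵀ = 1) : Fintype.card m ≤ A.charpoly.roots.countP fun t => 0 < p.eval t := by
  have := card_le_countP_pos_roots_of_submatrix (isHermitian_aeval hA p) hf hR
  rwa [roots_charpoly_aeval hA, Multiset.countP_map, ← Multiset.countP_eq_card_filter] at this

end Spectral

section TwoExceptional

variable {V : Type*} {G : SimpleGraph V}

lemma isHermitian_distMatrix [Fintype V] (G : SimpleGraph V) : (distMatrix G).IsHermitian := by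
  ext u v
  simp [distMatrix, SimpleGraph.dist_comm]

/-- Exactly two distance eigenvalues of `G`, counted with multiplicity, differ from `-1` and
`-3`. -/
def TwoExceptional [Fintype V] [DecidableEq V] (G : SimpleGraph V) : Prop :=
  (distEigs G).countP (fun t => t ≠ -1 ∧ t ≠ -3) = 2

lemma dist_getVert_getVert {u v : V} {p : G.Walk u v} (hp : p.length = G.dist u v) {i j : ℕ}
    (hij : i ≤ j) (hj : j ≤ p.length) : G.dist (p.getVert i) (p.getVert j) = j - i := by
  have h := SimpleGraph.length_eq_dist_of_subwalk hp
    (((p.take j).isSubwalk_drop i).trans (p.isSubwalk_take j))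
  rw [SimpleGraph.Walk.drop_length, SimpleGraph.Walk.take_length, SimpleGraph.Walk.take_getVert,
    min_eq_right hij, min_eq_left hj] at h
  exact h.symm

lemma exists_isometric_path (hG : G.Connected) {u v : V} {k : ℕ} (hk : k ≤ G.dist u v) :
    ∃ f : Fin (k + 1) → V, ∀ i j, G.dist (f i) (f j) = ((j : ℤ) - i).natAbs := by
  obtain ⟨p, hp⟩ := hG.exists_walk_length_eq_dist u v
  refine ⟨fun i => p.getVert i, fun i j => ?_⟩
  rcases le_total i j with h | h
  · rw [dist_getVert_getVert hp h (by omega)]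
    omega
  · rw [SimpleGraph.dist_comm, dist_getVert_getVert hp h (by omega)]
    omega

variable [Fintype V] [DecidableEq V]

lemma TwoExceptional.countP_add_countP_le (hG : TwoExceptional G) :
    (distEigs G).countP (-1 < ·) + (distEigs G).countP (· < -3) ≤ 2 := by
  refine le_of_le_of_eq ?_ hG
  simp only [Multiset.countP_eq_card_filter]
  rw [← Multiset.card_add, Multiset.filter_add_filter]
  have hempty : (distEigs G).filter (fun t => -1 < t ∧ t < -3) = 0 :=
    Multiset.filter_eq_nil.mpr fun t _ ht => by linarith [ht.1, ht.2]
  rw [hempty, add_zero]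
  refine Multiset.card_le_card (Multiset.monotone_filter_right _ fun t ht => ?_)
  rcases ht with h | h <;> constructor <;> linarith

lemma card_le_countP_neg_one_lt {s m : Type*} [Fintype s] [Fintype m] [DecidableEq m] {f : s → V}
    {K : Matrix s s ℤ} (hf : (distMatrix G + 1).submatrix f f = K.map (Int.castRingHom ℝ))
    {R : Matrix m s ℤ} (hR : R * K * Rᵀ = 1) :
    Fintype.card m ≤ (distEigs G).countP (-1 < ·) := by
  have haeval : aeval (distMatrix G) (X + 1 : ℝ[X]) = distMatrix G + 1 := by simp
  have h := card_le_countP_eval_pos (isHermitian_distMatrix G) (X + 1) (haeval ▸ hf) hR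
  simpa only [distEigs, neg_lt_iff_pos_add, eval_add, eval_X, eval_one] using h

lemma card_le_countP_lt_neg_three {s m : Type*} [Fintype s] [Fintype m] [DecidableEq m]
    {f : s → V} {K : Matrix s s ℤ}
    (hf : (-(distMatrix G + (3 : ℝ) • 1)).submatrix f f = K.map (Int.castRingHom ℝ))
    {R : Matrix m s ℤ} (hR : R * K * Rᵀ = 1) :
    Fintype.card m ≤ (distEigs G).countP (· < -3) := by
  have haeval : aeval (distMatrix G) (-(X + C 3) : ℝ[X]) = -(distMatrix G + (3 : ℝ) • 1) := by
    simp [Algebra.algebraMap_eq_smul_one]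
  have h := card_le_countP_eval_pos (isHermitian_distMatrix G) (-(X + C 3)) (haeval ▸ hf) hR
  simpa only [distEigs, lt_neg_iff_add_neg, eval_neg, eval_add, eval_X, eval_C, zero_add] using h

/- On an isometric path with four vertices `D + 1` is positive definite on a plane and `D + 3` is
negative on a line, which accounts for three exceptional eigenvalues. -/
lemma TwoExceptional.dist_le_two (hG : TwoExceptional G) (hconn : G.Connected) (u v : V) :
    G.dist u v ≤ 2 := by
  by_contra! h
  obtain ⟨f, hf⟩ := exists_isometric_path hconn h
  have hinj : Function.Injective f := fun i j hij => by
    have hzero := hf i j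
    rw [hij, SimpleGraph.dist_self] at hzero
    omega
  have h2 : 2 ≤ (distEigs G).countP (-1 < ·) :=
    card_le_countP_neg_one_lt (f := ![f 0, f 1, f 2]) (K := !![1, 1, 2; 1, 1, 1; 2, 1, 1])
      (R := !![1, 0, 0; 0, -2, 1])
      (by ext i j; fin_cases i <;> fin_cases j <;> simp [distMatrix, hf, hinj.eq_iff]) (by decide)
  have h1 : 1 ≤ (distEigs G).countP (· < -3) :=
    card_le_countP_lt_neg_three (f := f)
      (K := !![-3, -1, -2, -3; -1, -3, -1, -2; -2, -1, -3, -1; -3, -2, -1, -3])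
      (R := !![4, 2, 0, -7])
      (by ext i j; fin_cases i <;> fin_cases j <;> simp [distMatrix, hf, hinj.eq_iff]) (by decide)
  have := hG.countP_add_countP_le
  omega

end TwoExceptional

section ForbiddenSubgraphs

open SimpleGraph

variable {V : Type u} {G H : SimpleGraph V}

/-- `P₄ + K₁`: the path `0 1 2 3` together with the isolated vertex `4`. -/
abbrev pathAddIsolated : SimpleGraph (Fin 5) := .fromEdgeSet {s(0, 1), s(1, 2), s(2, 3)}

/-- `paw + K₁`: the triangle `0 1 2` with the pendant edge `2 3`, together with the isolated
vertex `4`. -/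
abbrev pawAddIsolated : SimpleGraph (Fin 5) := .fromEdgeSet {s(0, 1), s(1, 2), s(0, 2), s(2, 3)}

/-- `2K₂ + K₁`: the edges `0 1` and `2 3` together with the isolated vertex `4`. -/
abbrev matchingAddIsolated : SimpleGraph (Fin 5) := .fromEdgeSet {s(0, 1), s(2, 3)}

/-- The local conditions that the complement of a two-exceptional graph satisfies: no edge is
dominating, and five graphs on five vertices do not occur as induced subgraphs. -/
structure IsLocallyAdmissible (H : SimpleGraph V) : Prop where
  exists_not_adj ⦃x y : V⦄ (hxy : H.Adj x y) : ∃ w, ¬H.Adj w x ∧ ¬H.Adj w y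
  cycle_free : ¬cycleGraph 5 ⊴ H
  path_free : ¬pathGraph 5 ⊴ H
  pathAddIsolated_free : ¬pathAddIsolated ⊴ H
  pawAddIsolated_free : ¬pawAddIsolated ⊴ H
  matchingAddIsolated_free : ¬matchingAddIsolated ⊴ H

-- A pattern without false twins separates its vertices, so `f` is automatically injective.
lemma isIndContained_of_adj_iff {n : ℕ} {F : SimpleGraph (Fin n)}
    (hF : ∀ i j, (∀ k, F.Adj i k ↔ F.Adj j k) → i = j) (f : Fin n → V)
    (hf : ∀ i j, i < j → (H.Adj (f i) (f j) ↔ F.Adj i j)) : F ⊴ H := by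
  have hadj : ∀ i j, H.Adj (f i) (f j) ↔ F.Adj i j := by
    intro i j
    rcases lt_trichotomy i j with h | rfl | h
    · exact hf i j h
    · simp
    · rw [H.adj_comm, F.adj_comm, hf j i h]
  exact ⟨⟨⟨f, fun i j hij => hF i j fun k => by rw [← hadj, ← hadj, hij]⟩, hadj _ _⟩⟩

instance (n : ℕ) : DecidableRel (pathGraph n).Adj :=
  fun _ _ => decidable_of_iff _ pathGraph_adj.symm

namespace IsLocallyAdmissible

lemma adj_of_path {a b c d : V} (hH : IsLocallyAdmissible H) (hab : H.Adj a b) (hbc : H.Adj b c)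
    (hcd : H.Adj c d) (hac : ¬H.Adj a c) (hbd : ¬H.Adj b d) : H.Adj a d := by
  by_contra had
  obtain ⟨w, hwb, hwc⟩ := hH.exists_not_adj hbc
  by_cases hwa : H.Adj w a <;> by_cases hwd : H.Adj w d
  · refine hH.cycle_free (isIndContained_of_adj_iff (by decide) ![w, a, b, c, d] ?_)
    intro i j hij
    fin_cases i <;> fin_cases j <;> simp_all +decide
  · refine hH.path_free (isIndContained_of_adj_iff (by decide) ![w, a, b, c, d] ?_)
    intro i j hij
    fin_cases i <;> fin_cases j <;> simp_all +decide
  · refine hH.path_free (isIndContained_of_adj_iff (by decide) ![a, b, c, d, w] ?_)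
    intro i j hij
    fin_cases i <;> fin_cases j <;> simp_all +decide [H.adj_comm]
  · refine hH.pathAddIsolated_free (isIndContained_of_adj_iff (by decide) ![a, b, c, d, w] ?_)
    intro i j hij
    fin_cases i <;> fin_cases j <;> simp_all +decide [H.adj_comm]

lemma not_adj_of_adj {u v w z : V} (hH : IsLocallyAdmissible H) (huv : H.Adj u v)
    (hwz : H.Adj w z) (hwu : ¬H.Adj w u) (hwv : ¬H.Adj w v) : ¬H.Adj z u := by
  intro hzu
  have hzv : H.Adj z v := by
    by_contra hzv
    exact hwv (hH.adj_of_path hwz hzu huv hwu hzv)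
  obtain ⟨e, hew, hez⟩ := hH.exists_not_adj hwz
  have he : ∀ x, H.Adj z x → ¬H.Adj w x → ¬H.Adj e x := fun x hzx hwx hex =>
    hew (hH.adj_of_path hex hzx.symm hwz.symm hez (hwx ·.symm))
  have heu := he u hzu hwu
  have hev := he v hzv hwv
  refine hH.pawAddIsolated_free (isIndContained_of_adj_iff (by decide) ![u, v, z, w, e] ?_)
  intro i j hij
  fin_cases i <;> fin_cases j <;> simp_all +decide [H.adj_comm]

lemma not_reachable {u v w : V} (hH : IsLocallyAdmissible H) (huv : H.Adj u v)
    (hwu : ¬H.Adj w u) (hwv : ¬H.Adj w v) : ¬H.Reachable w u := by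
  suffices h : ∀ z, H.Reachable w z → ¬H.Adj z u ∧ ¬H.Adj z v from
    fun hr => (h u hr).2 huv
  intro z hr
  rw [reachable_iff_reflTransGen] at hr
  induction hr with
  | refl => exact ⟨hwu, hwv⟩
  | tail _ h ih =>
    exact ⟨hH.not_adj_of_adj huv h ih.1 ih.2, hH.not_adj_of_adj huv.symm h ih.2 ih.1⟩

lemma not_adj_trans_of_reachable {x y z : V} (hH : IsLocallyAdmissible H) (hxy : ¬H.Adj x y)
    (hyz : ¬H.Adj y z) (hr : H.Reachable x y) : ¬H.Adj x z := fun hxz =>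
  hH.not_reachable hxz (hxy ·.symm) hyz hr.symm

lemma not_adj_trans_of_not_reachable {u v x y z : V} (hH : IsLocallyAdmissible H)
    (huv : H.Adj u v) (hx : ¬H.Reachable u x) (hy : ¬H.Reachable u y) (hxy : ¬H.Adj x y)
    (hyz : ¬H.Adj y z) : ¬H.Adj x z := by
  intro hxz
  have hz : ¬H.Reachable u z := fun h => hx (h.trans hxz.symm.reachable)
  have hne : ∀ {t}, ¬H.Reachable u t → ¬H.Adj u t ∧ ¬H.Adj v t := fun ht =>
    ⟨fun h => ht h.reachable, fun h => ht (huv.reachable.trans h.reachable)⟩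
  have := hne hx
  have := hne hy
  have := hne hz
  refine hH.matchingAddIsolated_free (isIndContained_of_adj_iff (by decide) ![u, v, x, z, y] ?_)
  intro i j hij
  fin_cases i <;> fin_cases j <;> simp_all +decide [H.adj_comm]

end IsLocallyAdmissible

/-- A partition of the vertices of `G` into cliques, indexed by `P` and distributed over two
nonempty sides, such that two cliques are completely joined if they lie on different sides and
have no edges between them otherwise; some side carries at least two cliques. Thus `G` is the
join of two disjoint unions of complete graphs, but is not complete. -/
structure CliqueJoin (G : SimpleGraph V) (P : Type*) where
  part : V → P
  side : P → Bool
  part_surjective : Function.Surjective part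
  side_surjective : Function.Surjective side
  exists_ne : ∃ i j, i ≠ j ∧ side i = side j
  compl_adj_iff : ∀ x y, Gᶜ.Adj x y ↔ part x ≠ part y ∧ side (part x) = side (part y)

lemma exists_cliqueJoin (side : V → Bool) (hside : Function.Surjective side)
    (hadj : ∀ x y, Gᶜ.Adj x y → side x = side y)
    (htrans : ∀ x y z, side x = side y → ¬Gᶜ.Adj x y → ¬Gᶜ.Adj y z → ¬Gᶜ.Adj x z)
    (hne : Gᶜ ≠ ⊥) : ∃ P : Type u, Nonempty (CliqueJoin G P) := by
  let r : Setoid V :=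
    { r x y := side x = side y ∧ ¬Gᶜ.Adj x y
      iseqv :=
        { refl x := ⟨rfl, Gᶜ.irrefl⟩
          symm h := ⟨h.1.symm, fun h' => h.2 h'.symm⟩
          trans h h' := ⟨h.1.trans h'.1, htrans _ _ _ h.1 h.2 h'.2⟩ } }
  have hpart : ∀ x y, (⟦x⟧ : Quotient r) = ⟦y⟧ ↔ side x = side y ∧ ¬Gᶜ.Adj x y := fun x y =>
    Quotient.eq
  have hcompl : ∀ x y, Gᶜ.Adj x y ↔ (⟦x⟧ : Quotient r) ≠ ⟦y⟧ ∧ side x = side y := by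
    intro x y
    have := hadj x y
    have := hpart x y
    tauto
  obtain ⟨x, y, hxy⟩ := ne_bot_iff_exists_adj.mp hne
  have hlift : ∀ x y, r x y → side x = side y := fun _ _ h => h.1
  let C : CliqueJoin G (Quotient r) :=
    { part := Quotient.mk r
      side := Quotient.lift side hlift
      part_surjective := Quotient.mk_surjective
      side_surjective := fun b => (hside b).imp' (Quotient.mk r) fun _ => id
      exists_ne := ⟨⟦x⟧, ⟦y⟧, (hcompl x y).mp hxy⟩
      compl_adj_iff := hcompl }
  exact ⟨Quotient r, ⟨C⟩⟩

lemma IsLocallyAdmissible.exists_cliqueJoin (hG : IsLocallyAdmissible Gᶜ) (hne : Gᶜ ≠ ⊥) :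
    ∃ P : Type u, Nonempty (CliqueJoin G P) := by
  classical
  obtain ⟨u, v, huv⟩ := ne_bot_iff_exists_adj.mp hne
  obtain ⟨w, hwu, hwv⟩ := hG.exists_not_adj huv
  have hw : ¬Gᶜ.Reachable u w := fun h => hG.not_reachable huv hwu hwv h.symm
  refine DistanceSpectrum.exists_cliqueJoin (fun x => decide (Gᶜ.Reachable u x)) ?_ ?_ ?_ hne
  · rintro (_ | _)
    exacts [⟨w, by simpa using hw⟩, ⟨u, by simp⟩]
  · intro x y hxy
    simpa using ⟨fun h => h.trans hxy.reachable, fun h => h.trans hxy.symm.reachable⟩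
  · intro x y z hxy hnxy hnyz
    rw [decide_eq_decide] at hxy
    by_cases hx : Gᶜ.Reachable u x
    · exact hG.not_adj_trans_of_reachable hnxy hnyz (hx.symm.trans (hxy.mp hx))
    · exact hG.not_adj_trans_of_not_reachable huv hx (mt hxy.mpr hx) hnxy hnyz

end ForbiddenSubgraphs

section Complement

variable {V : Type u} [Fintype V] [DecidableEq V] {G : SimpleGraph V}

lemma distMatrix_add_one [DecidableRel G.Adj]
    (hG : ∀ x y, Gᶜ.Adj x y → ∃ w, G.Adj x w ∧ G.Adj w y) :
    distMatrix G + 1 = of (fun _ _ => 1) + Gᶜ.adjMatrix ℝ := by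
  ext x y
  simp only [Matrix.add_apply, of_apply, distMatrix, SimpleGraph.adjMatrix_apply]
  rcases eq_or_ne x y with rfl | hne
  · simp
  by_cases hxy : G.Adj x y
  · simp [hne, hxy, SimpleGraph.dist_eq_one_iff_adj.mpr hxy]
  have hc : Gᶜ.Adj x y := (G.compl_adj x y).mpr ⟨hne, hxy⟩
  obtain ⟨w, hxw, hwy⟩ := hG x y hc
  have hle : G.dist x y ≤ 2 := G.dist_le (.cons hxw (.cons hwy .nil))
  have hlt := (hxw.reachable.trans hwy.reachable).one_lt_dist_of_ne_of_not_adj hne hxy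
  have hdist : G.dist x y = 2 := by omega
  norm_num [hne, hc, hdist]

namespace TwoExceptional

lemma exists_adj_adj (hG : TwoExceptional G) (hconn : G.Connected) {x y : V} (hxy : Gᶜ.Adj x y) :
    ∃ w, G.Adj x w ∧ G.Adj w y := by
  have hlt := hconn.one_lt_dist_of_ne_of_not_adj hxy.1 hxy.2
  have hdist : G.dist x y = 2 := le_antisymm (hG.dist_le_two hconn x y) hlt
  have hedist : G.edist x y = 2 := by
    rw [← (hconn x y).coe_dist_eq_edist, hdist, Nat.cast_ofNat]
  obtain ⟨w, hxw, hyw⟩ := (SimpleGraph.edist_eq_two_iff.mp hedist).2.2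
  exact ⟨w, hxw, hyw.symm⟩

lemma rank_add_one_mul_add_three (hG : TwoExceptional G) :
    ((distMatrix G + 1) * (distMatrix G + (3 : ℝ) • 1)).rank = 2 := by
  have haeval : aeval (distMatrix G) ((X + 1) * (X + C 3) : ℝ[X]) =
      (distMatrix G + 1) * (distMatrix G + (3 : ℝ) • 1) := by
    simp [Algebra.algebraMap_eq_smul_one]
  rw [← haeval, rank_aeval (isHermitian_distMatrix G)]
  simpa [TwoExceptional, distEigs, not_or, add_eq_zero_iff_eq_neg] using hG

lemma not_isIndContained (hG : TwoExceptional G) (hconn : G.Connected) {k : ℕ}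
    {F : SimpleGraph (Fin k)} [DecidableRel F.Adj] {R : Matrix (Fin 3) (Fin k) ℤ}
    (hR : R * (of (fun _ _ => 1) + F.adjMatrix ℤ) * Rᵀ = 1) : ¬F.IsIndContained Gᶜ := by
  classical
  rintro ⟨f⟩
  have hsub : (distMatrix G + 1).submatrix f f =
      (of (fun _ _ => 1) + F.adjMatrix ℤ).map (Int.castRingHom ℝ) := by
    rw [distMatrix_add_one fun _ _ => hG.exists_adj_adj hconn]
    ext i j
    simp only [submatrix_apply, Matrix.add_apply, of_apply, SimpleGraph.adjMatrix_apply, map_apply,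
      f.map_adj_iff]
    split_ifs <;> norm_num
  have h3 : 3 ≤ (distEigs G).countP (-1 < ·) := card_le_countP_neg_one_lt hsub hR
  have := hG.countP_add_countP_le
  omega

/- The rows of each certificate are orthonormal for `D + 1`, so at least three distance eigenvalues
would exceed `-1`. -/
lemma isLocallyAdmissible_compl (hG : TwoExceptional G) (hconn : G.Connected) :
    IsLocallyAdmissible Gᶜ where
  exists_not_adj x y hxy := by
    obtain ⟨w, hxw, hwy⟩ := hG.exists_adj_adj hconn hxy
    exact ⟨w, fun h => h.2 hxw.symm, fun h => h.2 hwy⟩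
  cycle_free := hG.not_isIndContained hconn
    (R := !![0, 0, 1, 0, 0; 0, 1, 0, 0, -2; 1, 0, 0, -1, 1]) (by decide)
  path_free := hG.not_isIndContained hconn
    (R := !![1, 0, 0, 0, 0; 0, -1, 1, 1, 0; -2, 1, 2, 0, -2]) (by decide)
  pathAddIsolated_free := hG.not_isIndContained hconn
    (R := !![0, 0, 1, 0, 0; -1, 0, 0, 1, -1; 0, 1, 0, 0, -2]) (by decide)
  pawAddIsolated_free := hG.not_isIndContained hconn
    (R := !![0, 1, 0, 0, 0; 0, 0, 1, 0, -2; 1, 0, 0, -2, 0]) (by decide)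
  matchingAddIsolated_free := hG.not_isIndContained hconn
    (R := !![0, 0, 0, 1, 0; 0, -1, 1, 0, -1; 1, 0, 1, 0, -3]) (by decide)

lemma compl_ne_bot (hG : TwoExceptional G) : Gᶜ ≠ ⊥ := by
  classical
  intro hbot
  have hJ : distMatrix G + 1 = vecMulVec 1 1 := by
    rw [distMatrix_add_one (by simp [hbot])]
    ext x y
    simp [hbot, vecMulVec_apply]
  have hle := (rank_mul_le_left (distMatrix G + 1) (distMatrix G + (3 : ℝ) • 1)).trans_eq
    (congrArg rank hJ)
  rw [hG.rank_add_one_mul_add_three] at hle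
  exact absurd (hle.trans (rank_vecMulVec_le _ _)) (by norm_num)

lemma exists_cliqueJoin (hG : TwoExceptional G) (hconn : G.Connected) :
    ∃ P : Type u, Nonempty (CliqueJoin G P) :=
  (hG.isLocallyAdmissible_compl hconn).exists_cliqueJoin hG.compl_ne_bot

end TwoExceptional

end Complement

section CoreMatrix

lemma rank_submatrix_of_surjective {R : Type*} [CommRing R] [StrongRankCondition R]
    {m n m₀ n₀ : Type*} [Fintype n] [Fintype n₀] {r : m₀ → m} {c : n₀ → n}
    (hr : Function.Surjective r) (hc : Function.Surjective c) (A : Matrix m n R) :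
    (A.submatrix r c).rank = A.rank := by
  obtain ⟨r', hr'⟩ := hr.hasRightInverse
  obtain ⟨c', hc'⟩ := hc.hasRightInverse
  have hA : (A.submatrix r c).submatrix r' c' = A := by
    rw [submatrix_submatrix, hr'.comp_eq_id, hc'.comp_eq_id, submatrix_id_id]
  refine le_antisymm (rank_submatrix_le _ _ _) ?_
  simpa only [hA] using rank_submatrix_le (A.submatrix r c) r' c'

lemma det_submatrix_eq_zero_of_rank_lt {K n m : Type*} [Field K] [Fintype n] [Fintype m]
    [DecidableEq m] {A : Matrix n n K} (hA : A.rank < Fintype.card m) (f : m → n) :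
    (A.submatrix f f).det = 0 := by
  by_contra h
  have hrank := rank_of_isUnit _ ((isUnit_iff_isUnit_det _).mpr (isUnit_iff_ne_zero.mpr h))
  exact hA.not_ge (hrank ▸ rank_submatrix_le A f f)

namespace CliqueJoin

variable {V P : Type*} {G : SimpleGraph V} (C : CliqueJoin G P)

lemma adj_of_side_ne {x y : V} (h : C.side (C.part x) ≠ C.side (C.part y)) : G.Adj x y := by
  by_contra hxy
  have hne : x ≠ y := fun hxy => h (hxy ▸ rfl)
  exact h ((C.compl_adj_iff x y).mp ⟨hne, hxy⟩).2

variable [DecidableEq P]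

/-- The common values of `D + 1` on the blocks cut out by two cliques. -/
def core : Matrix P P ℝ :=
  of fun i j => 1 + if i ≠ j ∧ C.side i = C.side j then 1 else 0

lemma distMatrix_add_one [Fintype V] [DecidableEq V] :
    distMatrix G + 1 = C.core.submatrix C.part C.part := by
  classical
  rw [DistanceSpectrum.distMatrix_add_one fun x y hxy => ?_]
  · ext x y
    simp [core, SimpleGraph.adjMatrix_apply, C.compl_adj_iff]
  · obtain ⟨i, hi⟩ := C.side_surjective !C.side (C.part x)
    obtain ⟨w, rfl⟩ := C.part_surjective i
    have hside := ((C.compl_adj_iff x y).mp hxy).2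
    exact ⟨w, C.adj_of_side_ne (by simp [hi]), C.adj_of_side_ne (by simp [hi, hside])⟩

/-- The number of vertices of the clique `i`. -/
def size [Fintype V] (i : P) : ℕ := Fintype.card {x // C.part x = i}

lemma size_pos [Fintype V] (i : P) : 0 < C.size i :=
  Fintype.card_pos_iff.mpr <| (C.part_surjective i).elim fun x hx => ⟨x, hx⟩

variable [Fintype P]

lemma core_mulVec (z : P → ℝ) (i : P) :
    (C.core *ᵥ z) i = ∑ j, z j + ∑ j with C.side j = C.side i, z j - z i := by
  have hcore : ∀ j, C.core i j * z j =
      z j + (if C.side j = C.side i then z j else 0) - if i = j then z j else 0 := by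
    intro j
    by_cases hij : i = j <;> by_cases hs : C.side j = C.side i <;>
      simp_all [core, eq_comm, two_mul, one_add_one_eq_two]
  simp [mulVec, dotProduct, hcore, Finset.sum_add_distrib, Finset.sum_filter]

-- The sums `S` and `T` over the two sides satisfy `(2 * a - 1) * S + a * T = 0` and
-- `b * S + (2 * b - 1) * T = 0`, where `a` and `b` count the cliques on the two sides.
lemma sum_eq_zero_of_core_mulVec_eq_zero {z : P → ℝ} (hz : C.core *ᵥ z = 0) (b : Bool) :
    ∑ i with C.side i = b, z i = 0 := by
  set S : Bool → ℝ := fun b => ∑ i with C.side i = b, z i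
  set a : Bool → ℕ := fun b => Finset.card {i | C.side i = b}
  have htotal : ∑ i, z i = S true + S false := by
    rw [← Finset.sum_fiberwise Finset.univ C.side, Fintype.sum_bool]
  have hS : ∀ b, S b = a b * (S true + S false + S b) := by
    intro b
    rw [← nsmul_eq_mul]
    refine Finset.sum_eq_card_nsmul fun i hi => ?_
    have h := congrFun hz i
    rw [C.core_mulVec, (Finset.mem_filter.mp hi).2, htotal, Pi.zero_apply] at h
    exact (sub_eq_zero.mp h).symm
  have ha : ∀ b, 1 ≤ a b := by
    intro b
    obtain ⟨i, hi⟩ := C.side_surjective b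
    exact Finset.card_pos.mpr ⟨i, by simpa using hi⟩
  have hlt : 2 < a true + a false := by
    obtain ⟨i, j, hij, hside⟩ := C.exists_ne
    have h2 : 2 ≤ a (C.side i) :=
      Finset.one_lt_card.mpr ⟨i, by simp, j, by simp [hside], hij⟩
    have := ha true
    have := ha false
    cases h : C.side i <;> rw [h] at h2 <;> omega
  have hdet : (0 : ℝ) < (2 * a true - 1) * (2 * a false - 1) - a true * a false := by
    have h1 : (1 : ℝ) ≤ a true := mod_cast ha true
    have h2 : (1 : ℝ) ≤ a false := mod_cast ha false
    have h3 : (2 : ℝ) < a true + a false := mod_cast hlt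
    nlinarith [mul_nonneg (sub_nonneg.mpr h1) (sub_nonneg.mpr h2)]
  refine (mul_eq_zero.mp ?_).resolve_left hdet.ne'
  cases b
  · linear_combination a false * hS true - (2 * a true - 1) * hS false
  · linear_combination a true * hS false - (2 * a false - 1) * hS true

lemma isUnit_core : IsUnit C.core := by
  rw [← mulVec_injective_iff_isUnit]
  refine (injective_iff_map_eq_zero C.core.mulVecLin).mpr fun z hz => funext fun i => ?_
  have hsum := C.sum_eq_zero_of_core_mulVec_eq_zero hz
  have htotal : ∑ i, z i = 0 := by
    rw [← Finset.sum_fiberwise Finset.univ C.side, Fintype.sum_bool, hsum, hsum, add_zero]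
  have h := congrFun hz i
  rw [mulVecLin_apply, C.core_mulVec, htotal, hsum, zero_add, zero_sub] at h
  exact neg_eq_zero.mp h

variable [Fintype V]

lemma sum_comp_part (f : P → ℝ) : ∑ x, f (C.part x) = ∑ i, C.size i * f i := by
  rw [← Finset.sum_fiberwise' Finset.univ C.part f]
  simp [size, Fintype.card_subtype]

lemma trace_submatrix_part (A : Matrix P P ℝ) :
    (A.submatrix C.part C.part).trace = ∑ i, C.size i * A i i :=
  C.sum_comp_part fun i => A i i

lemma submatrix_part_mul_submatrix_part (A B : Matrix P P ℝ) :
    A.submatrix C.part C.part * B.submatrix C.part C.part =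
      (A * diagonal (fun i => (C.size i : ℝ)) * B).submatrix C.part C.part := by
  ext x y
  rw [submatrix_apply, Matrix.mul_apply, Matrix.mul_apply]
  simp only [submatrix_apply, mul_diagonal]
  rw [C.sum_comp_part fun i => A (C.part x) i * B i (C.part y)]
  exact Finset.sum_congr rfl fun i _ => by ring

variable [DecidableEq V]

lemma distMatrix_add_one_mul_add_three :
    (distMatrix G + 1) * (distMatrix G + (3 : ℝ) • 1) =
      (C.core * (diagonal (fun i => (C.size i : ℝ)) * C.core + (2 : ℝ) • 1)).submatrix
        C.part C.part := by
  have hthree : distMatrix G + (3 : ℝ) • 1 = (distMatrix G + 1) + (2 : ℝ) • 1 := by module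
  rw [hthree, Matrix.mul_add, C.distMatrix_add_one, C.submatrix_part_mul_submatrix_part,
    Matrix.mul_add, Matrix.mul_smul, Matrix.mul_smul, Matrix.mul_one, Matrix.mul_one,
    Matrix.mul_assoc]
  rfl

lemma rank_diagonal_mul_core_add_two (hG : TwoExceptional G) :
    (diagonal (fun i => (C.size i : ℝ)) * C.core + (2 : ℝ) • 1).rank = 2 := by
  rw [← hG.rank_add_one_mul_add_three, C.distMatrix_add_one_mul_add_three,
    rank_submatrix_of_surjective C.part_surjective C.part_surjective,
    rank_mul_eq_right_of_isUnit_det _ _ ((isUnit_iff_isUnit_det _).mp C.isUnit_core)]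

end CliqueJoin

end CoreMatrix

section Sizes

variable {V P : Type*} {G : SimpleGraph V}

lemma eq_two_or_one_five {p q s : ℕ} (hp : 0 < p) (hq : 0 < q) (hs : 0 < s)
    (h : 8 + 4 * (p + q + s) = 6 * p * q + p * q * s) :
    (p = 2 ∧ q = 2) ∨ (p = 1 ∧ q = 5 ∧ s = 2) ∨ (p = 5 ∧ q = 1 ∧ s = 2) := by
  have hpq : p * q ≤ 5 := by nlinarith
  have hp5 : p ≤ 5 := by nlinarith
  have hq5 : q ≤ 5 := by nlinarith
  interval_cases p <;> interval_cases q <;> omega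

namespace CliqueJoin

variable [Fintype V] [DecidableEq V] [DecidableEq P] (C : CliqueJoin G P)

lemma size_equation (hG : TwoExceptional G) {i j t : P} (hij : i ≠ j) (hside : C.side i = C.side j)
    (ht : C.side t ≠ C.side i) :
    8 + 4 * (C.size i + C.size j + C.size t) =
      6 * C.size i * C.size j + C.size i * C.size j * C.size t := by
  have := Fintype.ofSurjective C.part C.part_surjective
  have hit : i ≠ t := fun h => ht (h ▸ rfl)
  have hjt : j ≠ t := fun h => ht (hside ▸ h ▸ rfl)
  have hminor : (diagonal (fun i => (C.size i : ℝ)) * C.core + (2 : ℝ) • 1).submatrix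
      ![i, j, t] ![i, j, t] =
      (!![C.size i + 2, C.size i * 2, C.size i;
        C.size j * 2, C.size j + 2, C.size j;
        C.size t, C.size t, C.size t + 2] : Matrix (Fin 3) (Fin 3) ℝ) := by
    ext a b
    fin_cases a <;> fin_cases b <;>
      simp [core, hij, hij.symm, hit, hit.symm, hjt, hjt.symm, ← hside, ht, ht.symm,
        one_add_one_eq_two]
  have hdet := det_submatrix_eq_zero_of_rank_lt (m := Fin 3)
    (by rw [C.rank_diagonal_mul_core_add_two hG, Fintype.card_fin]; norm_num) ![i, j, t]
  rw [hminor, det_fin_three] at hdet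
  simp only [of_apply, cons_val] at hdet
  rw [← Nat.cast_inj (R := ℝ)]
  push_cast
  linear_combination hdet

lemma size_eq (hG : TwoExceptional G) {i j t : P} (hij : i ≠ j) (hside : C.side i = C.side j)
    (ht : C.side t ≠ C.side i) :
    (C.size i = 2 ∧ C.size j = 2) ∨ (C.size i = 1 ∧ C.size j = 5 ∧ C.size t = 2) ∨
      (C.size i = 5 ∧ C.size j = 1 ∧ C.size t = 2) :=
  eq_two_or_one_five (C.size_pos i) (C.size_pos j) (C.size_pos t)
    (C.size_equation hG hij hside ht)

end CliqueJoin

end Sizes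

section Shape

/-- The clique sizes on the two sides of the clique join of a two-exceptional graph. In the second
case `s = 2` is excluded to keep the three cases disjoint. -/
inductive IsShape : Multiset ℕ → Multiset ℕ → Prop
  | two_two (k l : ℕ) (hk : 0 < k) (hl : 0 < l) :
    IsShape (.replicate k 2) (.replicate l 2)
  | two_singleton (k s : ℕ) (hk : 0 < k) (hs : s ≠ 2) : IsShape (.replicate k 2) {s}
  | two_one_five (k : ℕ) (hk : 0 < k) : IsShape (.replicate k 2) {1, 5}

namespace CliqueJoin

variable {V P : Type*} {G : SimpleGraph V}

/-- The clique join with its two sides exchanged. -/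
def flip (C : CliqueJoin G P) : CliqueJoin G P where
  part := C.part
  side i := !C.side i
  part_surjective := C.part_surjective
  side_surjective b := (C.side_surjective !b).imp fun _ h => by simp [h]
  exists_ne := by simpa using C.exists_ne
  compl_adj_iff x y := by simpa using C.compl_adj_iff x y

variable [Fintype V] [Fintype P] [DecidableEq P] (C : CliqueJoin G P) {b : Bool}

/-- The sizes of the cliques on the side `b`. -/
def sizes (b : Bool) : Multiset ℕ :=
  (Finset.univ.filter fun i => C.side i = b).val.map C.size

lemma sizes_flip (b : Bool) : C.flip.sizes b = C.sizes !b := by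
  simp only [sizes, flip, Bool.not_eq_eq_eq_not]
  rfl

lemma exists_sizes_eq_replicate (h : ∀ i, C.side i = b → C.size i = 2) :
    ∃ k, 0 < k ∧ C.sizes b = .replicate k 2 := by
  obtain ⟨i, hi⟩ := C.side_surjective b
  have hmem : ∀ n ∈ C.sizes b, n = 2 := by simpa [sizes] using h
  have hi' : C.size i ∈ C.sizes b := Multiset.mem_map_of_mem _ (by simpa using hi)
  exact ⟨_, Multiset.card_pos_iff_exists_mem.mpr ⟨_, hi'⟩, Multiset.eq_replicate_card.mpr hmem⟩

lemma sizes_eq_singleton {i : P} (hi : C.side i = b) (h : ∀ j, C.side j = b → j = i) :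
    C.sizes b = {C.size i} := by
  have hfilter : (Finset.univ.filter fun j => C.side j = b) = {i} := by
    ext j
    simpa using ⟨h j, fun hj => hj ▸ hi⟩
  rw [sizes, hfilter]
  rfl

lemma sizes_eq_pair {i j : P} (hij : i ≠ j) (hi : C.side i = b) (hj : C.side j = b)
    (h : ∀ r, C.side r = b → r = i ∨ r = j) : C.sizes b = {C.size i, C.size j} := by
  have hfilter : (Finset.univ.filter fun r => C.side r = b) = {i, j} := by
    ext r
    simpa using ⟨h r, by rintro (rfl | rfl) <;> assumption⟩
  rw [sizes, hfilter, Finset.insert_val_of_notMem (by simpa using hij)]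
  rfl

variable [DecidableEq V]

lemma sizes_trichotomy (hG : TwoExceptional G) (b : Bool) :
    (∀ i, C.side i = b → C.size i = 2) ∨ (∃ s, s ≠ 2 ∧ C.sizes b = {s}) ∨
      C.sizes b = {1, 5} ∧ ∀ t, C.side t = !b → C.size t = 2 := by
  by_cases! hall : ∀ i, C.side i = b → C.size i = 2
  · exact .inl hall
  obtain ⟨i, rfl, hi2⟩ := hall
  by_cases! hone : ∀ j, C.side j = C.side i → j = i
  · exact .inr (.inl ⟨_, hi2, C.sizes_eq_singleton rfl hone⟩)
  obtain ⟨j, hj, hji⟩ := hone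
  have hne : ∀ {t}, C.side t = !C.side i → C.side t ≠ C.side i := fun ht => by simp [ht]
  have hpair := fun {r t} (hri : i ≠ r) (hr : C.side i = C.side r) ht =>
    C.size_eq hG (t := t) hri hr (hne ht)
  obtain ⟨t₀, ht₀⟩ := C.side_surjective !C.side i
  have honly : ∀ r, C.side r = C.side i → r = i ∨ r = j := by
    intro r hr
    by_contra! hr'
    have := hpair hji.symm hj.symm ht₀
    have := hpair hr'.1.symm hr.symm ht₀
    have := C.size_eq hG hr'.2 (hr.trans hj.symm) (hr ▸ hne ht₀)
    omega
  have hother : ∀ t, C.side t = !C.side i → C.size t = 2 := fun t ht => by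
    have := hpair hji.symm hj.symm ht
    omega
  refine .inr (.inr ⟨?_, hother⟩)
  rw [C.sizes_eq_pair hji.symm rfl hj honly]
  rcases hpair hji.symm hj.symm ht₀ with h | ⟨h1, h5, -⟩ | ⟨h5, h1, -⟩
  · exact absurd h.1 hi2
  · rw [h1, h5]
  · rw [h1, h5, Multiset.pair_comm]

lemma exists_isShape (hG : TwoExceptional G) : ∃ b, IsShape (C.sizes b) (C.sizes !b) := by
  obtain ⟨i, j, hij, hside⟩ := C.exists_ne
  rcases C.sizes_trichotomy hG (C.side i) with h2 | ⟨s, -, hs⟩ | ⟨h15, h2⟩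
  · refine ⟨C.side i, ?_⟩
    obtain ⟨k, hk, hsizes⟩ := C.exists_sizes_eq_replicate h2
    rw [hsizes]
    rcases C.sizes_trichotomy hG (!C.side i) with h2' | ⟨s, hs2, hs⟩ | ⟨h15, -⟩
    · obtain ⟨l, hl, hsizes'⟩ := C.exists_sizes_eq_replicate h2'
      exact hsizes' ▸ .two_two k l hk hl
    · exact hs ▸ .two_singleton k s hk hs2
    · exact h15 ▸ .two_one_five k hk
  · have hcard : 1 < (C.sizes (C.side i)).card := by
      rw [sizes, Multiset.card_map]
      exact Finset.one_lt_card.mpr ⟨i, by simp, j, by simp [hside], hij⟩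
    simp [hs] at hcard
  · refine ⟨!C.side i, ?_⟩
    obtain ⟨k, hk, hsizes⟩ := C.exists_sizes_eq_replicate h2
    rw [Bool.not_not, hsizes, h15]
    exact .two_one_five k hk

end CliqueJoin

lemma TwoExceptional.exists_cliqueJoin_isShape {V : Type u} [Fintype V] [DecidableEq V]
    {G : SimpleGraph V} (hG : TwoExceptional G) (hconn : G.Connected) :
    ∃ (P : Type u) (_ : Fintype P) (_ : DecidableEq P) (C : CliqueJoin G P),
      IsShape (C.sizes true) (C.sizes false) := by
  classical
  obtain ⟨P, ⟨C⟩⟩ := hG.exists_cliqueJoin hconn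
  have := Fintype.ofSurjective C.part C.part_surjective
  refine ⟨P, this, inferInstance, ?_⟩
  obtain ⟨_ | _, h⟩ := C.exists_isShape hG
  · exact ⟨C.flip, by simpa only [C.sizes_flip, Bool.not_true, Bool.not_false] using h⟩
  · exact ⟨C, h⟩

end Shape

section Invariants

/-- The number of ordered pairs of vertices in different cliques of a disjoint union of cliques
with sizes `s`. -/
def pairCount (s : Multiset ℕ) : ℤ := (s.sum : ℤ) ^ 2 - ((s.map (· ^ 2)).sum : ℕ)

lemma pairCount_replicate (k m : ℕ) : pairCount (.replicate k m) = k * (k - 1) * m ^ 2 := by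
  simp only [pairCount, Multiset.sum_replicate, Multiset.map_replicate, nsmul_eq_mul]
  push_cast
  ring

lemma pairCount_singleton (s : ℕ) : pairCount {s} = 0 := by
  simp [pairCount]

lemma pairCount_one_five : pairCount {1, 5} = 10 := rfl

lemma eq_and_eq_or_of_add_eq_add {R : Type*} [CommRing R] [IsDomain R] {a b c d : R}
    (hadd : a + b = c + d) (hmul : a * b = c * d) : a = c ∧ b = d ∨ a = d ∧ b = c := by
  have hfactor : (a - c) * (a - d) = 0 := by linear_combination a * hadd - hmul
  rcases mul_eq_zero.mp hfactor with h | h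
  · exact .inl ⟨sub_eq_zero.mp h, by linear_combination hadd - h⟩
  · exact .inr ⟨sub_eq_zero.mp h, by linear_combination hadd - h⟩

-- The number of vertices minus twice the number of cliques separates the first shape from the
-- others, and `pairCount` modulo 4 separates the last two.
lemma IsShape.unique {T F T' F' : Multiset ℕ} (h : IsShape T F) (h' : IsShape T' F')
    (hsum : T.sum + F.sum = T'.sum + F'.sum) (hcard : T.card + F.card = T'.card + F'.card)
    (hpair : pairCount T + pairCount F = pairCount T' + pairCount F') :
    (T = T' ∧ F = F') ∨ (T = F' ∧ F = T') := by
  rcases h with ⟨k, l, hk, hl⟩ | ⟨k, s, hk, hs⟩ | ⟨k, hk⟩ <;>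
    rcases h' with ⟨k', l', hk', hl'⟩ | ⟨k', s', hk', hs'⟩ | ⟨k', hk'⟩ <;>
    simp only [Multiset.sum_replicate, Multiset.card_replicate, Multiset.sum_singleton,
      Multiset.card_singleton, Multiset.sum_pair, Multiset.card_pair, smul_eq_mul,
      pairCount_replicate, pairCount_singleton, pairCount_one_five] at hsum hcard hpair
  · have hadd : (k : ℤ) + l = k' + l' := by exact_mod_cast hcard
    have hmul : (k : ℤ) * l = k' * l' := by
      have hsq := congrArg (· ^ 2) hadd
      push_cast at hsq hpair
      linarith
    rcases eq_and_eq_or_of_add_eq_add hadd hmul with ⟨h1, h2⟩ | ⟨h1, h2⟩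
    all_goals
      rw [Nat.cast_inj] at h1 h2
      subst h1 h2
    · exact .inl ⟨rfl, rfl⟩
    · exact .inr ⟨rfl, rfl⟩
  · omega
  · omega
  · omega
  · obtain rfl : k = k' := by omega
    obtain rfl : s = s' := by omega
    exact .inl ⟨rfl, rfl⟩
  · obtain rfl : k = k' + 1 := by omega
    push_cast at hpair
    ring_nf at hpair
    omega
  · omega
  · obtain rfl : k' = k + 1 := by omega
    push_cast at hpair
    ring_nf at hpair
    omega
  · obtain rfl : k = k' := by omega
    exact .inl ⟨rfl, rfl⟩

end Invariants

section Spectrum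

lemma card_distEigs {V : Type*} [Fintype V] [DecidableEq V] (G : SimpleGraph V) :
    (distEigs G).card = Fintype.card V := by
  rw [distEigs, (isHermitian_distMatrix G).roots_charpoly_eq_eigenvalues, Multiset.card_map]
  rfl

namespace CliqueJoin

variable {V P : Type*} [Fintype V] {G : SimpleGraph V} [Fintype P] [DecidableEq P]
  (C : CliqueJoin G P)

lemma sum_map_sizes (f : ℕ → ℕ) :
    ((C.sizes true).map f).sum + ((C.sizes false).map f).sum = ∑ i, f (C.size i) := by
  rw [← Finset.sum_fiberwise Finset.univ C.side, Fintype.sum_bool, sizes, sizes, Multiset.map_map,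
    Multiset.map_map]
  rfl

lemma sum_size : ∑ i, C.size i = Fintype.card V := by
  have h := C.sum_comp_part fun _ => 1
  simp only [mul_one, Finset.sum_const, Finset.card_univ, nsmul_eq_mul] at h
  exact_mod_cast h.symm

lemma sum_sum_same_side :
    ∑ i, ∑ j, (if C.side j = C.side i then (C.size i * C.size j : ℝ) else 0) =
      ((C.sizes true).sum : ℝ) ^ 2 + ((C.sizes false).sum : ℝ) ^ 2 := by
  have hfiber : ∀ b, ∑ i with C.side i = b, (C.size i : ℝ) = ((C.sizes b).sum : ℝ) :=
    fun b => (Nat.cast_sum _ _).symm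
  have hinner : ∀ i, ∑ j, (if C.side j = C.side i then (C.size i * C.size j : ℝ) else 0) =
      C.size i * (C.sizes (C.side i)).sum := fun i => by
    rw [← Finset.sum_filter, ← Finset.mul_sum, hfiber]
  have houter : ∀ b, ∑ i with C.side i = b, (C.size i * (C.sizes (C.side i)).sum : ℝ) =
      ((C.sizes b).sum : ℝ) ^ 2 := fun b => by
    rw [pow_two, ← hfiber b, Finset.sum_mul, hfiber b]
    exact Finset.sum_congr rfl fun i hi => by rw [(Finset.mem_filter.mp hi).2]
  simp only [hinner]
  rw [← Finset.sum_fiberwise Finset.univ C.side, Fintype.sum_bool, houter, houter]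

lemma sum_sum_core_sq : ∑ i, ∑ j, (C.size i * C.size j * C.core i j ^ 2 : ℝ) =
    (Fintype.card V : ℝ) ^ 2 +
      3 * ((pairCount (C.sizes true) + pairCount (C.sizes false) : ℤ) : ℝ) := by
  have hcore : ∀ i j, (C.size i * C.size j * C.core i j ^ 2 : ℝ) = C.size i * C.size j +
      3 * (if C.side j = C.side i then (C.size i * C.size j : ℝ) else 0) -
      3 * (if j = i then (C.size i * C.size j : ℝ) else 0) := by
    intro i j
    rcases eq_or_ne j i with rfl | hij
    · simp [core]
    · have hcoreij : C.core i j = 1 + if C.side j = C.side i then 1 else 0 := by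
        simp [core, hij.symm, eq_comm]
      rw [hcoreij, if_neg hij]
      split_ifs <;> ring
  have htotal : ∑ i, ∑ j, (C.size i * C.size j : ℝ) = (Fintype.card V : ℝ) ^ 2 := by
    rw [← C.sum_size, pow_two, Nat.cast_sum, Finset.sum_mul_sum]
  have hdiag : ∑ i, ∑ j, (if j = i then (C.size i * C.size j : ℝ) else 0) =
      (((C.sizes true).map (· ^ 2)).sum + ((C.sizes false).map (· ^ 2)).sum : ℕ) := by
    rw [C.sum_map_sizes (· ^ 2)]
    simp [pow_two]
  simp only [hcore, Finset.sum_add_distrib, Finset.sum_sub_distrib, ← Finset.mul_sum _ _ (3 : ℝ),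
    htotal, C.sum_sum_same_side, hdiag, pairCount, Int.cast_add, Int.cast_sub, Int.cast_pow,
    Int.cast_natCast, Nat.cast_add]
  ring

variable [DecidableEq V]

lemma sum_sizes : (C.sizes true).sum + (C.sizes false).sum = (distEigs G).card := by
  simpa only [Multiset.map_id', C.sum_size, card_distEigs] using C.sum_map_sizes fun n => n

lemma card_sizes :
    (C.sizes true).card + (C.sizes false).card = (distEigs G).countP (· + 1 ≠ 0) := by
  have haeval : aeval (distMatrix G) (X + 1 : ℝ[X]) = distMatrix G + 1 := by simp
  have hrank : (distMatrix G + 1).rank = Fintype.card P := by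
    rw [C.distMatrix_add_one, rank_submatrix_of_surjective C.part_surjective C.part_surjective,
      rank_of_isUnit _ C.isUnit_core]
  rw [← haeval, rank_aeval (isHermitian_distMatrix G)] at hrank
  simp only [eval_add, eval_X, eval_one] at hrank
  rw [distEigs, hrank]
  simpa using C.sum_map_sizes fun _ => 1

lemma sum_add_one_sq : ((distEigs G).map fun t => (t + 1) ^ 2).sum =
    ((distEigs G).card : ℝ) ^ 2 +
      3 * ((pairCount (C.sizes true) + pairCount (C.sizes false) : ℤ) : ℝ) := by
  have haeval : aeval (distMatrix G) ((X + 1) ^ 2 : ℝ[X]) =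
      (distMatrix G + 1) * (distMatrix G + 1) := by simp [pow_two]
  have htrace := trace_aeval (isHermitian_distMatrix G) ((X + 1) ^ 2)
  rw [haeval, C.distMatrix_add_one, C.submatrix_part_mul_submatrix_part, C.trace_submatrix_part]
    at htrace
  have hsymm : ∀ i j, C.core i j = C.core j i := fun i j => by simp [core, eq_comm]
  simp only [Matrix.mul_apply (M := _ * _), mul_diagonal, Finset.mul_sum] at htrace
  rw [card_distEigs, ← C.sum_sum_core_sq]
  trans ((distMatrix G).charpoly.roots.map ((X + 1) ^ 2 : ℝ[X]).eval).sum
  · simp [distEigs]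
  rw [← htrace]
  refine Finset.sum_congr rfl fun i _ => Finset.sum_congr rfl fun j _ => ?_
  rw [hsymm j i]
  ring

end CliqueJoin

end Spectrum

section Isomorphism

variable {V W P Q : Type*} [Fintype V] [Fintype W] {G : SimpleGraph V} {H : SimpleGraph W}
  [Fintype P] [DecidableEq P] [Fintype Q] [DecidableEq Q]

namespace CliqueJoin

lemma card_fiber_eq_count (C : CliqueJoin G P) (l : Bool × ℕ) :
    Fintype.card {i // (C.side i, C.size i) = l} = (C.sizes l.1).count l.2 := by
  rw [sizes, Multiset.count_map, Fintype.card_subtype, ← Finset.filter_val, Finset.card_val,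
    Finset.filter_filter]
  simp only [Prod.ext_iff, eq_comm]

lemma nonempty_iso (C : CliqueJoin G P) (D : CliqueJoin H Q) (h : ∀ b, C.sizes b = D.sizes b) :
    Nonempty (G ≃g H) := by
  have e : ∀ l : Bool × ℕ,
      {i // (C.side i, C.size i) = l} ≃ {i // (D.side i, D.size i) = l} := fun l =>
    Fintype.equivOfCardEq (by rw [card_fiber_eq_count, card_fiber_eq_count, h])
  set E : P ≃ Q := Equiv.ofFiberEquiv e
  have hE : ∀ i, (D.side (E i), D.size (E i)) = (C.side i, C.size i) := Equiv.ofFiberEquiv_map e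
  have hside : ∀ i, D.side (E i) = C.side i := fun i => congrArg Prod.fst (hE i)
  have f : ∀ q, {x // E (C.part x) = q} ≃ {y // D.part y = q} := fun q =>
    Fintype.equivOfCardEq (by
      have hsize := congrArg Prod.snd (hE (E.symm q))
      simp only [E.apply_symm_apply] at hsize
      simp only [← E.eq_symm_apply]
      exact hsize.symm)
  set F : V ≃ W := Equiv.ofFiberEquiv f
  have hF : ∀ x, D.part (F x) = E (C.part x) := Equiv.ofFiberEquiv_map f
  have hcompl : ∀ x y, Hᶜ.Adj (F x) (F y) ↔ Gᶜ.Adj x y := by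
    intro x y
    rw [C.compl_adj_iff, D.compl_adj_iff, hF, hF, E.injective.ne_iff, hside, hside]
  refine ⟨⟨F, fun {x y} => ?_⟩⟩
  rcases eq_or_ne x y with rfl | hxy
  · simp
  · simpa [hxy, not_iff_not] using hcompl x y

end CliqueJoin

end Isomorphism

end DistanceSpectrum

/- **Statement 18.** Every finite connected simple graph with exactly two distance eigenvalues
(with multiplicity) different from `−1` and `−3` is determined by its distance spectrum: if
`G` has this property and `H` is any finite connected simple graph with the same distance
spectrum as `G`, then `H ≅ G`. -/
open scoped Classical in
theorem exactly_two_distEigs_determined_by_distance_spectrum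
    {V W : Type*} [Fintype V] [DecidableEq V] [Fintype W] [DecidableEq W]
    (G : SimpleGraph V) (H : SimpleGraph W) (hG : G.Connected) (hH : H.Connected)
    (h2 : ((distEigs G).filter fun x => x ≠ -1 ∧ x ≠ -3).card = 2)
    (hspec : distEigs H = distEigs G) :
    Nonempty (H ≃g G) := by
  have hGtwo : DistanceSpectrum.TwoExceptional G := by
    rw [DistanceSpectrum.TwoExceptional, Multiset.countP_eq_card_filter]
    convert h2
  have hHtwo : DistanceSpectrum.TwoExceptional H := by
    rwa [DistanceSpectrum.TwoExceptional, hspec]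
  obtain ⟨P, _, _, C, hC⟩ := hGtwo.exists_cliqueJoin_isShape hG
  obtain ⟨Q, _, _, D, hD⟩ := hHtwo.exists_cliqueJoin_isShape hH
  have hsum := D.sum_sizes.trans (hspec ▸ C.sum_sizes.symm)
  have hcard := D.card_sizes.trans (hspec ▸ C.card_sizes.symm)
  have hpair := D.sum_add_one_sq.symm.trans (hspec ▸ C.sum_add_one_sq)
  rw [add_right_inj, mul_right_inj' three_ne_zero, Int.cast_inj] at hpair
  rcases hD.unique hC hsum hcard hpair with ⟨htrue, hfalse⟩ | ⟨htrue, hfalse⟩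
  · exact D.nonempty_iso C (by simp [htrue, hfalse])
  · exact D.nonempty_iso C.flip (by simp [C.sizes_flip, htrue, hfalse])
end
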